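/- Normalization inequality for positive operators: let A and B be nonzero positive semidefinite complex matrices of the same size, with traces a := Tr A > 0 and b := Tr B > 0. Then ‖ A/a − B/b ‖₁ ≤ (2 / min(a,b)) · ‖A − B‖₁. -/

import Mathlib

open Matrix BigOperators
open scoped ComplexOrder MatrixOrder

noncomputable section

/-- The trace norm of a complex matrix: `Tr √(MᴴM)` (sum of singular values). -/
noncomputable def traceNorm {m n : Type*} [Fintype m] [Fintype n] [DecidableEq n]
    (M : Matrix m n ℂ) : ℝ :=
  ((CFC.sqrt (Mᴴ * M)).trace).re

/-- Kronecker (tensor) product of a finite family of `D × D` matrices. -/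
noncomputable def kron {D : ℕ} {ι : Type*} [Fintype ι]
    (μs : ι → Matrix (Fin D) (Fin D) ℂ) :
    Matrix (ι → Fin D) (ι → Fin D) ℂ :=
  fun x y => ∏ m, μs m (x m) (y m)

/-- A `δ`-injective virtual superoperator in Kraus form. -/
def IsKrausDeltaInjective {ι : Type*} [Fintype ι] [DecidableEq ι] (D : ℕ) (δ : ℝ)
    (Φ : Matrix ι ι ℂ →ₗ[ℂ] Matrix (Fin D) (Fin D) ℂ) : Prop :=
  ∃ (k : ℕ) (c : Fin k → ℝ) (K : Fin k → Matrix (Fin D) ι ℂ),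
    (∀ a, δ ^ 2 ≤ c a ∧ c a ≤ 1) ∧
    (∑ a, (K a)ᴴ * K a) = (D : ℂ) • (1 : Matrix ι ι ℂ) ∧
    (∀ X, Φ X = ∑ a, (c a : ℂ) • (K a * X * (K a)ᴴ))

/-!
The identity `a⁻¹A - b⁻¹B = a⁻¹(A - B) + (a⁻¹ - b⁻¹)B` splits the left-hand side into two terms of
trace norm at most `‖A - B‖₁ / a`: in the second, `‖B‖₁ = b` because `B ≥ 0`, and
`|b - a| = |Tr (A - B)| ≤ ‖A - B‖₁`. That the trace norm is subadditive and dominates the trace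
comes from duality: `‖M‖₁` is the maximum of `Re Tr (CᴴM)` over all contractions `C`, attained at
the partial isometry in the polar decomposition of `M`.
-/

section Contractions

variable {m n 𝕜 : Type*} [Fintype m] [Fintype n] [RCLike 𝕜]

theorem re_trace_conjTranspose_mul_le (X Y : Matrix m n 𝕜) :
    RCLike.re (Xᴴ * Y).trace ≤
      (RCLike.re (Xᴴ * X).trace + RCLike.re (Yᴴ * Y).trace) / 2 := by
  have hnonneg : 0 ≤ RCLike.re ((X - Y)ᴴ * (X - Y)).trace :=
    (RCLike.nonneg_iff.mp (posSemidef_conjTranspose_mul_self (X - Y)).trace_nonneg).1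
  have hsymm : RCLike.re (Yᴴ * X).trace = RCLike.re (Xᴴ * Y).trace := by
    rw [← RCLike.conj_re, starRingEnd_apply, ← trace_conjTranspose, conjTranspose_mul,
      conjTranspose_conjTranspose]
  simp only [conjTranspose_sub, Matrix.sub_mul, Matrix.mul_sub, trace_sub, map_sub] at hnonneg
  linarith

open scoped Classical in
theorem sqrt_conjTranspose_mul_self_mul_self (M : Matrix m n 𝕜) :
    CFC.sqrt (Mᴴ * M) * CFC.sqrt (Mᴴ * M) = Mᴴ * M :=
  CFC.sqrt_mul_sqrt_self _ (nonneg_iff_posSemidef.mpr (posSemidef_conjTranspose_mul_self M))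

variable [DecidableEq n]

theorem re_trace_conjTranspose_mul_self_contraction_mul_le {l : Type*} [Fintype l]
    {C : Matrix m n 𝕜} (hC : Cᴴ * C ≤ 1) (X : Matrix n l 𝕜) :
    RCLike.re ((C * X)ᴴ * (C * X)).trace ≤ RCLike.re (Xᴴ * X).trace := by
  have hnonneg : 0 ≤ RCLike.re (Xᴴ * (1 - Cᴴ * C) * X).trace :=
    (RCLike.nonneg_iff.mp ((le_iff.mp hC).conjTranspose_mul_mul_same X).trace_nonneg).1
  simpa only [Matrix.mul_sub, Matrix.sub_mul, Matrix.mul_one, trace_sub, map_sub, sub_nonneg,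
    conjTranspose_mul, Matrix.mul_assoc] using hnonneg

theorem exists_isHermitian_pseudoinverse {P : Matrix n n 𝕜} (hP : P.IsHermitian) :
    ∃ Q : Matrix n n 𝕜, Q.IsHermitian ∧ Commute P Q ∧ P * Q * P = P ∧ P * Q ≤ 1 := by
  have hP_self : IsSelfAdjoint P := hP.isSelfAdjoint
  have hcont (f : ℝ → ℝ) : ContinuousOn f (spectrum ℝ P) := P.finite_real_spectrum.continuousOn f
  have hPQ : P * cfc (fun x : ℝ ↦ x⁻¹) P = cfc (fun x : ℝ ↦ x * x⁻¹) P := by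
    rw [cfc_mul _ _ P (hcont _) (hcont _), cfc_id' ℝ P]
  -- Since `0⁻¹ = 0`, functional calculus by `x ↦ x⁻¹` gives the Moore–Penrose inverse.
  refine ⟨cfc (fun x : ℝ ↦ x⁻¹) P, IsSelfAdjoint.cfc, ?_, ?_, ?_⟩
  · simpa only [cfc_id' ℝ P] using cfc_commute_cfc (fun x : ℝ ↦ x) (fun x ↦ x⁻¹) P
  · calc P * cfc (fun x : ℝ ↦ x⁻¹) P * P
        = cfc (fun x : ℝ ↦ x * x⁻¹ * x) P := by
          rw [cfc_mul (fun x : ℝ ↦ x * x⁻¹) _ P (hcont _) (hcont _), cfc_id' ℝ P, hPQ]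
      _ = P := by simp only [mul_inv_mul_cancel, cfc_id' ℝ P]
  · rw [hPQ]
    exact cfc_le_one _ P fun _ _ ↦ mul_inv_le_one

theorem exists_polar_decomposition (M : Matrix m n 𝕜) :
    ∃ W : Matrix m n 𝕜, Wᴴ * W ≤ 1 ∧ W * CFC.sqrt (Mᴴ * M) = M ∧
      Wᴴ * M = CFC.sqrt (Mᴴ * M) := by
  set P : Matrix n n 𝕜 := CFC.sqrt (Mᴴ * M)
  have hP : P.IsHermitian := (nonneg_iff_posSemidef.mp (CFC.sqrt_nonneg _)).isHermitian
  have hMM : Mᴴ * M = P * P := (sqrt_conjTranspose_mul_self_mul_self M).symm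
  obtain ⟨Q, hQ, hcomm, hPQP, hPQ⟩ := exists_isHermitian_pseudoinverse hP
  have hWM : (M * Q)ᴴ * M = P := by
    rw [conjTranspose_mul, hQ.eq, Matrix.mul_assoc, hMM, ← Matrix.mul_assoc, ← hcomm.eq, hPQP]
  refine ⟨M * Q, ?_, ?_, hWM⟩
  · rwa [← Matrix.mul_assoc, hWM]
  · have hker : P * (Q * P - 1) = 0 := by
      rw [Matrix.mul_sub, ← Matrix.mul_assoc, hPQP, Matrix.mul_one, sub_self]
    have hMker : M * (Q * P - 1) = 0 := by
      rw [← conjTranspose_mul_self_mul_eq_zero, hMM, Matrix.mul_assoc, hker, Matrix.mul_zero]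
    rwa [Matrix.mul_sub, Matrix.mul_one, sub_eq_zero, ← Matrix.mul_assoc] at hMker

end Contractions

section TraceNorm

variable {m n : Type*} [Fintype m] [Fintype n] [DecidableEq n]

theorem traceNorm_nonneg (M : Matrix m n ℂ) : 0 ≤ traceNorm M :=
  (Complex.nonneg_iff.mp (nonneg_iff_posSemidef.mp (CFC.sqrt_nonneg _)).trace_nonneg).1

theorem re_trace_conjTranspose_mul_le_traceNorm {C : Matrix m n ℂ} (hC : Cᴴ * C ≤ 1)
    (M : Matrix m n ℂ) : (Cᴴ * M).trace.re ≤ traceNorm M := by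
  obtain ⟨W, hW, hWM, -⟩ := exists_polar_decomposition M
  set P := CFC.sqrt (Mᴴ * M)
  set R := CFC.sqrt P
  have hR : Rᴴ = R := (nonneg_iff_posSemidef.mp (CFC.sqrt_nonneg P)).isHermitian.eq
  have hRR : R * R = P := CFC.sqrt_mul_sqrt_self P (CFC.sqrt_nonneg _)
  -- With `R = √P`, `Tr (CᴴM)` is the Hilbert–Schmidt inner product of `CR` and `WR`.
  have htrace : (Cᴴ * M).trace = ((C * R)ᴴ * (W * R)).trace := by
    calc (Cᴴ * M).trace
        = (Cᴴ * W * R * Rᴴ).trace := by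
          rw [hR, Matrix.mul_assoc _ R, hRR, Matrix.mul_assoc, hWM]
      _ = ((C * R)ᴴ * (W * R)).trace := by
          rw [trace_mul_comm, conjTranspose_mul]
          simp only [Matrix.mul_assoc]
  have hcontract {D : Matrix m n ℂ} (hD : Dᴴ * D ≤ 1) :
      ((D * R)ᴴ * (D * R)).trace.re ≤ traceNorm M := by
    have hle := re_trace_conjTranspose_mul_self_contraction_mul_le hD R
    rwa [hR, hRR] at hle
  calc (Cᴴ * M).trace.re
      ≤ (((C * R)ᴴ * (C * R)).trace.re + ((W * R)ᴴ * (W * R)).trace.re) / 2 :=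
        htrace ▸ re_trace_conjTranspose_mul_le (C * R) (W * R)
    _ ≤ traceNorm M := by linarith [hcontract hC, hcontract hW]

theorem traceNorm_add_le (M N : Matrix m n ℂ) :
    traceNorm (M + N) ≤ traceNorm M + traceNorm N := by
  obtain ⟨W, hW, -, hWMN⟩ := exists_polar_decomposition (M + N)
  calc traceNorm (M + N)
      = (Wᴴ * M).trace.re + (Wᴴ * N).trace.re := by
        rw [traceNorm, ← hWMN, Matrix.mul_add, trace_add, Complex.add_re]
    _ ≤ traceNorm M + traceNorm N :=
        add_le_add (re_trace_conjTranspose_mul_le_traceNorm hW M)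
          (re_trace_conjTranspose_mul_le_traceNorm hW N)

theorem traceNorm_smul (c : ℂ) (M : Matrix m n ℂ) : traceNorm (c • M) = ‖c‖ * traceNorm M := by
  have hsqrt : CFC.sqrt ((c • M)ᴴ * (c • M)) = ‖c‖ • CFC.sqrt (Mᴴ * M) := by
    refine CFC.sqrt_unique ?_ (smul_nonneg (norm_nonneg c) (CFC.sqrt_nonneg _))
    rw [smul_mul_smul_comm, sqrt_conjTranspose_mul_self_mul_self, conjTranspose_smul,
      Matrix.smul_mul, Matrix.mul_smul, smul_smul, Complex.star_def, Complex.conj_mul', ← pow_two,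
      ← Complex.ofReal_pow, Complex.coe_smul]
  rw [traceNorm, hsqrt, trace_smul, Complex.smul_re, smul_eq_mul, traceNorm]

theorem traceNorm_of_posSemidef {A : Matrix n n ℂ} (hA : A.PosSemidef) :
    traceNorm A = A.trace.re := by
  rw [traceNorm, hA.isHermitian.eq, CFC.sqrt_mul_self A (nonneg_iff_posSemidef.mpr hA)]

theorem norm_trace_le_traceNorm (M : Matrix n n ℂ) : ‖M.trace‖ ≤ traceNorm M := by
  obtain ⟨c, hc, hcM⟩ := Complex.exists_norm_eq_mul_self M.trace
  calc ‖M.trace‖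
      = ((1 : Matrix n n ℂ)ᴴ * (c • M)).trace.re := by
        rw [conjTranspose_one, Matrix.one_mul, trace_smul, smul_eq_mul, ← hcM, Complex.ofReal_re]
    _ ≤ traceNorm (c • M) := re_trace_conjTranspose_mul_le_traceNorm (by simp) _
    _ = traceNorm M := by rw [traceNorm_smul, hc, one_mul]

end TraceNorm

theorem normalization_inequality_general {n : Type*} [Fintype n] [DecidableEq n]
    (A B : Matrix n n ℂ) (hB : B.PosSemidef) (hA0 : A.trace ≠ 0) (hB0 : B ≠ 0) :
    traceNorm (A.trace⁻¹ • A - B.trace⁻¹ • B) ≤ 2 / ‖A.trace‖ * traceNorm (A - B) := by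
  have hb : B.trace ≠ 0 := mt hB.trace_eq_zero_iff.mp hB0
  have hnormB : traceNorm B = ‖B.trace‖ := by
    rw [traceNorm_of_posSemidef hB, Complex.re_eq_norm.mpr hB.trace_nonneg]
  have hcoeff : ‖A.trace⁻¹ - B.trace⁻¹‖ * ‖B.trace‖ = ‖A.trace‖⁻¹ * ‖(A - B).trace‖ := by
    rw [← norm_inv, ← norm_mul, ← norm_mul, trace_sub, ← norm_neg]
    congr 1
    field_simp
    ring
  calc traceNorm (A.trace⁻¹ • A - B.trace⁻¹ • B)
      = traceNorm (A.trace⁻¹ • (A - B) + (A.trace⁻¹ - B.trace⁻¹) • B) := by congr 1; module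
    _ ≤ traceNorm (A.trace⁻¹ • (A - B)) + traceNorm ((A.trace⁻¹ - B.trace⁻¹) • B) :=
        traceNorm_add_le _ _
    _ = ‖A.trace‖⁻¹ * traceNorm (A - B) + ‖A.trace‖⁻¹ * ‖(A - B).trace‖ := by
        rw [traceNorm_smul, traceNorm_smul, hnormB, hcoeff, norm_inv]
    _ ≤ ‖A.trace‖⁻¹ * traceNorm (A - B) + ‖A.trace‖⁻¹ * traceNorm (A - B) := by
        gcongr
        exact norm_trace_le_traceNorm (A - B)
    _ = 2 / ‖A.trace‖ * traceNorm (A - B) := by ring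

/-- Normalization inequality for positive operators. -/
theorem normalization_inequality
    {n : Type*} [Fintype n] [DecidableEq n]
    (A B : Matrix n n ℂ) (hA : A.PosSemidef) (hB : B.PosSemidef)
    (hA0 : A ≠ 0) (hB0 : B ≠ 0)
    (a b : ℝ) (ha' : a = A.trace.re) (hb' : b = B.trace.re)
    (ha : 0 < a) (hb : 0 < b) :
    traceNorm (((a : ℂ))⁻¹ • A - ((b : ℂ))⁻¹ • B)
      ≤ (2 / min a b) * traceNorm (A - B) := by
  have hA_trace : A.trace = a := ha' ▸ Complex.eq_re_of_ofReal_le hA.trace_nonneg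
  have hB_trace : B.trace = b := hb' ▸ Complex.eq_re_of_ofReal_le hB.trace_nonneg
  calc traceNorm ((a : ℂ)⁻¹ • A - (b : ℂ)⁻¹ • B)
      ≤ 2 / a * traceNorm (A - B) := by
        simpa only [hA_trace, hB_trace, Complex.norm_of_nonneg ha.le] using
          normalization_inequality_general A B hB (mt hA.trace_eq_zero_iff.mp hA0) hB0
    _ ≤ 2 / min a b * traceNorm (A - B) := by
        have := traceNorm_nonneg (A - B)
        gcongr
        exact min_le_left a b

end
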